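/- In the high privacy regime, the optimal cost satisfies V*(ε) = 2Δ/ε − Δε²/(36√3) + O(ε³) as ε → 0⁺; precisely, lim_{ε→0⁺} (V*(ε) − 2Δ/ε)/ε² = −Δ/(36√3). In particular the gap between V*(ε) and the Laplacian-mechanism cost 2Δ/ε tends to 0 as ε → 0⁺. -/

import Mathlib

open MeasureTheory Real Filter
open scoped ENNReal Topology

noncomputable section

/-- The ℓ¹ norm on ℝ². -/
def l1 (x : ℝ × ℝ) : ℝ := |x.1| + |x.2|

/-- The ε-differential-privacy constraint on a measure on ℝ² with sensitivity Δ. -/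
def DPC (ε Δ : ℝ) (μ : Measure (ℝ × ℝ)) : Prop :=
  ∀ S : Set (ℝ × ℝ), MeasurableSet S → ∀ t : ℝ × ℝ, l1 t ≤ Δ →
    μ S ≤ ENNReal.ofReal (Real.exp ε) * μ ((· + t) '' S)

/-- Expected ℓ¹ cost of a noise distribution. -/
def cost (μ : Measure (ℝ × ℝ)) : ℝ≥0∞ := ∫⁻ x, ENNReal.ofReal (l1 x) ∂μ

/-- The optimal cost V*(ε): the infimum of the expected ℓ¹ cost over all probability
measures on ℝ² satisfying the ε-differential-privacy constraint. -/
def Vstar (Δ ε : ℝ) : ℝ≥0∞ :=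
  ⨅ (μ : Measure (ℝ × ℝ)) (_ : IsProbabilityMeasure μ ∧ DPC ε Δ μ), cost μ

lemma fold_lint (G : ℝ → ℝ≥0∞) (hG : Measurable G) :
    ∫⁻ r in Set.Ioi (0:ℝ), G r = ∫⁻ s in Set.Ico (0:ℝ) 1, ∑' k : ℕ, G (s + k) := by
  have hm : ∀ k : ℕ, Measurable (fun s : ℝ => G (s + k)) :=
    fun k => hG.comp (measurable_id.add_const _)
  rw [lintegral_tsum (fun k => (hm k).aemeasurable)]
  rw [← setLIntegral_congr (Ioi_ae_eq_Ici (a := (0:ℝ))).symm]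
  have hU : Set.Ici (0:ℝ) = ⋃ k : ℕ, Set.Ico (k:ℝ) (k+1) := by
    ext x
    simp only [Set.mem_Ici, Set.mem_iUnion, Set.mem_Ico]
    constructor
    · intro hx
      exact ⟨⌊x⌋₊, Nat.floor_le hx, Nat.lt_floor_add_one x⟩
    · rintro ⟨k, hk, _⟩
      exact le_trans (Nat.cast_nonneg k) hk
  rw [hU, lintegral_iUnion (fun k => measurableSet_Ico)]
  · congr 1
    ext k
    have := (measurePreserving_add_right (volume : Measure ℝ) (k:ℝ)).setLIntegral_comp_preimage_emb
      (measurableEmbedding_addRight (k:ℝ)) G (Set.Ico (k:ℝ) (k+1))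
    rw [← this]
    congr 2
    ext x
    simp [Set.mem_Ico]
  · intro i j hij
    simp only [Function.onFun]
    rw [Set.disjoint_left]
    rintro x ⟨h1, h2⟩ ⟨h3, h4⟩
    apply hij
    have a : (i:ℝ) < j + 1 := by linarith
    have b : (j:ℝ) < i + 1 := by linarith
    have a' : i < j + 1 := by exact_mod_cast a
    have b' : j < i + 1 := by exact_mod_cast b
    omega

/-- first chain sum -/
def p1 (q s : ℝ) : ℝ := s / (1 - q) + q / (1 - q) ^ 2
/-- second chain sum -/
def p2 (q s : ℝ) : ℝ := s ^ 2 / (1 - q) + 2 * s * q / (1 - q) ^ 2 + q * (1 + q) / (1 - q) ^ 3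

lemma hasSum_p1 {q : ℝ} (h0 : 0 < q) (h1 : q < 1) (s : ℝ) :
    HasSum (fun k : ℕ => (s + k) * q ^ k) (p1 q s) := by
  have hn : ‖q‖ < 1 := by rw [Real.norm_eq_abs, abs_of_pos h0]; exact h1
  have a := (hasSum_geometric_of_norm_lt_one hn).mul_left s
  have b := hasSum_coe_mul_geometric_of_norm_lt_one hn
  have := a.add b
  convert this using 1
  · rfl
  · funext k; ring
  · unfold p1; ring

lemma hasSum_p2 {q : ℝ} (h0 : 0 < q) (h1 : q < 1) (s : ℝ) :
    HasSum (fun k : ℕ => (s + k) ^ 2 * q ^ k) (p2 q s) := by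
  have hn : ‖q‖ < 1 := by rw [Real.norm_eq_abs, abs_of_pos h0]; exact h1
  have a := (hasSum_geometric_of_norm_lt_one hn).mul_left (s ^ 2 - 2)
  have b := (hasSum_coe_mul_geometric_of_norm_lt_one hn).mul_left (2 * s - 3)
  have c := (hasSum_choose_mul_geometric_of_norm_lt_one 2 hn).mul_left 2
  have := (a.add b).add c
  have hq : 1 - q ≠ 0 := by linarith
  convert this using 1
  · rfl
  · funext k
    rw [Nat.cast_choose_two]
    push_cast
    ring
  · unfold p2
    field_simp
    ring

lemma tsum_p1 {q : ℝ} (h0 : 0 < q) (h1 : q < 1) {s : ℝ} (hs : 0 ≤ s) {w : ℝ} (hw : 0 ≤ w) :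
    ∑' k : ℕ, ENNReal.ofReal ((s + k) * (w * q ^ k)) = ENNReal.ofReal (w * p1 q s) := by
  have h := (hasSum_p1 h0 h1 s).mul_left w
  rw [← h.tsum_eq, ENNReal.ofReal_tsum_of_nonneg _ h.summable]
  · congr 1; ext k; congr 1; ring
  · intro k; positivity

lemma tsum_p2 {q : ℝ} (h0 : 0 < q) (h1 : q < 1) {s : ℝ} (hs : 0 ≤ s) {w : ℝ} (hw : 0 ≤ w) :
    ∑' k : ℕ, ENNReal.ofReal ((s + k) ^ 2 * (w * q ^ k)) = ENNReal.ofReal (w * p2 q s) := by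
  have h := (hasSum_p2 h0 h1 s).mul_left w
  rw [← h.tsum_eq, ENNReal.ofReal_tsum_of_nonneg _ h.summable]
  · congr 1; ext k; congr 1; ring
  · intro k; positivity

/-- step weight -/
def stp (q γ s : ℝ) : ℝ := if s < γ then 1 else q

/-- the denominator -/
def DD (q γ : ℝ) : ℝ := γ ^ 2 / 2 + γ * q / (1 - q) + q * (1 / (2 * (1 - q)) + q / (1 - q) ^ 2)
/-- the numerator -/
def NN (q γ : ℝ) : ℝ := γ ^ 3 / 3 + γ ^ 2 * q / (1 - q) + γ * q * (1 + q) / (1 - q) ^ 2 +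
  q * (1 / (3 * (1 - q)) + q / (1 - q) ^ 2 + q * (1 + q) / (1 - q) ^ 3)

lemma lint_step {q γ : ℝ} (hγ0 : 0 ≤ γ) (hγ1 : γ ≤ 1) (hq : 0 ≤ q) (p : ℝ → ℝ) (hp : Continuous p)
    (hp0 : ∀ s, 0 ≤ s → 0 ≤ p s) :
    ∫⁻ s in Set.Ico (0:ℝ) 1, ENNReal.ofReal (stp q γ s * p s) =
      ENNReal.ofReal ((∫ s in (0:ℝ)..γ, p s) + q * ∫ s in γ..1, p s) := by
  have h1 : ∀ a b : ℝ, ∀ c : ℝ, 0 ≤ c → 0 ≤ a → a ≤ b →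
      ∫⁻ s in Set.Ico a b, ENNReal.ofReal (c * p s) = ENNReal.ofReal (c * ∫ s in a..b, p s) := by
    intro a b c hc ha hab
    rw [setLIntegral_congr Ico_ae_eq_Ioc, ← intervalIntegral.integral_const_mul,
      intervalIntegral.integral_of_le hab, ofReal_integral_eq_lintegral_ofReal]
    · exact ((continuous_const.mul hp).intervalIntegrable a b).1
    · filter_upwards [ae_restrict_mem measurableSet_Ioc] with s hs
      exact mul_nonneg hc (hp0 s (ha.trans hs.1.le))
  rw [← Set.Ico_union_Ico_eq_Ico hγ0 hγ1, lintegral_union measurableSet_Ico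
    (Set.Ico_disjoint_Ico_same), ENNReal.ofReal_add]
  · congr 1
    · have := h1 0 γ 1 zero_le_one le_rfl hγ0
      rw [one_mul] at this
      rw [← this]
      apply setLIntegral_congr_fun measurableSet_Ico
      intro s hs
      simp [stp, hs.2]
    · rw [← h1 γ 1 q hq hγ0 hγ1]
      apply setLIntegral_congr_fun measurableSet_Ico
      intro s hs
      simp [stp, not_lt.2 hs.1]
  · exact intervalIntegral.integral_nonneg hγ0 (fun s hs => hp0 s hs.1)
  · exact mul_nonneg hq (intervalIntegral.integral_nonneg hγ1 (fun s hs => hp0 s (hγ0.trans hs.1)))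

lemma p1_nonneg {q s : ℝ} (h0 : 0 < q) (h1 : q < 1) (hs : 0 ≤ s) : 0 ≤ p1 q s := by
  have : 0 < 1 - q := by linarith
  unfold p1; positivity
lemma p2_nonneg {q s : ℝ} (h0 : 0 < q) (h1 : q < 1) (hs : 0 ≤ s) : 0 ≤ p2 q s := by
  have : 0 < 1 - q := by linarith
  unfold p2; positivity
lemma cont_p1 (q : ℝ) : Continuous (p1 q) := by unfold p1; fun_prop
lemma cont_p2 (q : ℝ) : Continuous (p2 q) := by unfold p2; fun_prop

lemma lint_p1 {q γ : ℝ} (hγ0 : 0 ≤ γ) (hγ1 : γ ≤ 1) (h0 : 0 < q) (h1 : q < 1) :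
    ∫⁻ s in Set.Ico (0:ℝ) 1, ENNReal.ofReal (stp q γ s * p1 q s) = ENNReal.ofReal (DD q γ) := by
  rw [lint_step hγ0 hγ1 h0.le _ (cont_p1 q) (fun s hs => p1_nonneg h0 h1 hs)]
  congr 1
  have key : ∀ a b : ℝ, ∫ s in a..b, p1 q s =
      (b ^ 2 / 2 / (1 - q) + b * q / (1 - q) ^ 2) - (a ^ 2 / 2 / (1 - q) + a * q / (1 - q) ^ 2) := by
    intro a b
    apply intervalIntegral.integral_eq_sub_of_hasDerivAt
      (f := fun s => s ^ 2 / 2 / (1 - q) + s * q / (1 - q) ^ 2)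
    · intro x _
      have := (((hasDerivAt_pow 2 x).div_const 2).div_const (1 - q)).add
        (((hasDerivAt_id x).mul_const q).div_const ((1 - q) ^ 2))
      refine HasDerivAt.congr_deriv this ?_
      unfold p1; norm_num
    · exact (cont_p1 q).intervalIntegrable _ _
  rw [key, key]
  have hq : 1 - q ≠ 0 := by linarith
  unfold DD
  field_simp
  ring

lemma lint_p2 {q γ : ℝ} (hγ0 : 0 ≤ γ) (hγ1 : γ ≤ 1) (h0 : 0 < q) (h1 : q < 1) :
    ∫⁻ s in Set.Ico (0:ℝ) 1, ENNReal.ofReal (stp q γ s * p2 q s) = ENNReal.ofReal (NN q γ) := by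
  rw [lint_step hγ0 hγ1 h0.le _ (cont_p2 q) (fun s hs => p2_nonneg h0 h1 hs)]
  congr 1
  have key : ∀ a b : ℝ, ∫ s in a..b, p2 q s =
      (b ^ 3 / 3 / (1 - q) + b ^ 2 * q / (1 - q) ^ 2 + b * (q * (1 + q) / (1 - q) ^ 3)) -
      (a ^ 3 / 3 / (1 - q) + a ^ 2 * q / (1 - q) ^ 2 + a * (q * (1 + q) / (1 - q) ^ 3)) := by
    intro a b
    apply intervalIntegral.integral_eq_sub_of_hasDerivAt
      (f := fun s => s ^ 3 / 3 / (1 - q) + s ^ 2 * q / (1 - q) ^ 2 + s * (q * (1 + q) / (1 - q) ^ 3))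
    · intro x _
      have := ((((hasDerivAt_pow 3 x).div_const 3).div_const (1 - q)).add
        (((hasDerivAt_pow 2 x).mul_const q).div_const ((1 - q) ^ 2))).add
        ((hasDerivAt_id x).mul_const (q * (1 + q) / (1 - q) ^ 3))
      refine HasDerivAt.congr_deriv this ?_
      unfold p2; norm_num
    · exact (cont_p2 q).intervalIntegrable _ _
  rw [key, key]
  have hq : 1 - q ≠ 0 := by linarith
  unfold NN
  field_simp
  ring

lemma sign_pattern {q V : ℝ} (h1 : q < 1) :
    ∃ u γ : ℝ, 0 ≤ u ∧ u ≤ γ ∧ γ ≤ 1 ∧ ∀ s, 0 ≤ s → s < 1 →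
      (s < u → V * p1 q s ≤ p2 q s) ∧ (u ≤ s → s < γ → p2 q s ≤ V * p1 q s) ∧
      (γ ≤ s → V * p1 q s ≤ p2 q s) := by
  have hη : 0 < 1 - q := by linarith
  obtain ⟨b, c, hbc⟩ : ∃ b c : ℝ, ∀ s, p2 q s - V * p1 q s = (1 / (1 - q)) * (s ^ 2 + 2 * b * s + c) := by
    refine ⟨(q / (1 - q) - V / 2), (1 - q) * (q * (1 + q) / (1 - q) ^ 3 - V * (q / (1 - q) ^ 2)), ?_⟩
    intro s
    unfold p1 p2
    field_simp
    ring
  have hpos : ∀ s, 0 ≤ s ^ 2 + 2 * b * s + c → V * p1 q s ≤ p2 q s := by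
    intro s hs
    have := mul_nonneg (one_div_pos.2 hη).le hs
    rw [← hbc] at this; linarith
  have hneg : ∀ s, s ^ 2 + 2 * b * s + c ≤ 0 → p2 q s ≤ V * p1 q s := by
    intro s hs
    have := mul_nonpos_of_nonneg_of_nonpos (one_div_pos.2 hη).le hs
    rw [← hbc] at this; linarith
  by_cases hd : b ^ 2 - c ≤ 0
  · refine ⟨0, 0, le_rfl, le_rfl, zero_le_one, fun s hs0 hs1 => ⟨fun h => ?_, fun h h' => ?_, fun h => ?_⟩⟩
    · linarith
    · linarith
    · apply hpos; nlinarith [sq_nonneg (s + b)]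
  · push Not at hd
    obtain ⟨d, hd0, hd2⟩ : ∃ d : ℝ, 0 < d ∧ d ^ 2 = b ^ 2 - c :=
      ⟨√(b ^ 2 - c), Real.sqrt_pos.2 hd, Real.sq_sqrt hd.le⟩
    have hfac : ∀ s, s ^ 2 + 2 * b * s + c = (s - (-b - d)) * (s - (-b + d)) := by
      intro s; nlinarith
    refine ⟨max 0 (min 1 (-b - d)), max 0 (min 1 (-b + d)), le_max_left _ _, ?_, ?_, ?_⟩
    · exact max_le_max le_rfl (min_le_min le_rfl (by linarith))
    · exact max_le zero_le_one (min_le_left _ _)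
    · intro s hs0 hs1
      refine ⟨fun h => ?_, fun h h' => ?_, fun h => ?_⟩
      · apply hpos
        rw [hfac]
        have : s < -b - d := by
          rcases lt_max_iff.1 h with h | h
          · linarith
          · exact (lt_min_iff.1 h).2
        nlinarith
      · apply hneg
        rw [hfac]
        have a1 : s < -b + d := by
          rcases lt_max_iff.1 h' with h | h
          · linarith
          · exact (lt_min_iff.1 h).2
        have a2 : -b - d ≤ s := by
          rcases min_le_iff.1 ((max_le_iff.1 h).2) with h | h
          · linarith
          · exact h
        nlinarith
      · apply hpos
        rw [hfac]
        have a2 : -b + d ≤ s := by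
          rcases min_le_iff.1 ((max_le_iff.1 h).2) with h | h
          · linarith
          · exact h
        nlinarith

lemma chain_mono {q : ℝ} (h0 : 0 < q) (F : ℝ → ℝ)
    (hF : ∀ r r', 0 ≤ r → 0 ≤ r' → |r - r'| ≤ 1 → q * F r ≤ F r') (x : ℝ) (hx : 0 ≤ x) (n : ℕ) :
    q ^ n * F x ≤ F (x + n) := by
  induction n with
  | zero => simp
  | succ n ih =>
    have := hF (x + n) (x + (n + 1 : ℕ)) (by positivity) (by positivity)
      (by push_cast; rw [abs_le]; constructor <;> linarith)
    calc q ^ (n + 1) * F x = q * (q ^ n * F x) := by ring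
      _ ≤ q * F (x + n) := by gcongr
      _ ≤ _ := this

lemma chain_sign {q V : ℝ} (h0 : 0 < q) (F : ℝ → ℝ)
    (hF : ∀ r r', 0 ≤ r → 0 ≤ r' → |r - r'| ≤ 1 → q * F r ≤ F r') (s : ℝ) (hs : 0 ≤ s)
    (C : ℝ) (j : ℕ) (hj : |s + j - V| ≤ 1) (hC : C * q ^ j = F (s + j)) (k : ℕ) :
    0 ≤ (s + k - V) * (F (s + k) - C * q ^ k) := by
  rw [abs_le] at hj
  rcases lt_trichotomy k j with h | h | h
  · obtain ⟨n, rfl⟩ := Nat.exists_eq_add_of_lt h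
    have h1 := chain_mono h0 F hF (s + k) (by positivity) (n + 1)
    have e : s + (k:ℝ) + ((n + 1 : ℕ) : ℝ) = s + ((k + n + 1 : ℕ) : ℝ) := by push_cast; ring
    rw [e, ← hC] at h1
    have h2 : q ^ (n + 1) * F (s + k) ≤ q ^ (n + 1) * (C * q ^ k) := by
      refine h1.trans (le_of_eq ?_); ring
    have h3 := le_of_mul_le_mul_left h2 (by positivity)
    have h4 : s + k - V ≤ 0 := by
      have := hj.2
      push_cast at this
      have hn : (0:ℝ) ≤ n := Nat.cast_nonneg n
      linarith
    exact mul_nonneg_of_nonpos_of_nonpos h4 (by linarith)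
  · subst h
    rw [hC]; simp
  · obtain ⟨n, rfl⟩ := Nat.exists_eq_add_of_lt h
    have h1 := chain_mono h0 F hF (s + j) (by positivity) (n + 1)
    have e : s + (j:ℝ) + ((n + 1 : ℕ) : ℝ) = s + ((j + n + 1 : ℕ) : ℝ) := by push_cast; ring
    rw [e, ← hC] at h1
    have h2 : C * q ^ (j + n + 1) ≤ F (s + ((j + n + 1 : ℕ) : ℝ)) := by
      refine le_trans (le_of_eq ?_) h1; ring
    have h4 : 0 ≤ s + ((j + n + 1 : ℕ) : ℝ) - V := by
      have := hj.1
      push_cast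
      have hn : (0:ℝ) ≤ n := Nat.cast_nonneg n
      linarith
    exact mul_nonneg h4 (by linarith)

lemma pivot {q V : ℝ} (h0 : 0 < q) (h1 : q < 1) (hV : 1 ≤ V) (F : ℝ → ℝ) (F0 : ∀ r, 0 ≤ F r)
    (F1 : ∀ r, F r ≤ 1)
    (hF : ∀ r r', 0 ≤ r → 0 ≤ r' → |r - r'| ≤ 1 → q * F r ≤ F r') :
    ∃ γ cs : ℝ, 0 ≤ γ ∧ γ ≤ 1 ∧ 0 ≤ cs ∧ ∀ s, 0 ≤ s → s < 1 → ∃ c : ℝ, 0 ≤ c ∧ ∃ j : ℕ,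
      |s + j - V| ≤ 1 ∧ (c * stp q γ s) * q ^ j = F (s + j) ∧
      0 ≤ (c - cs) * (p2 q s - V * p1 q s) := by
  obtain ⟨u, γ, hu, huγ, hγ, hsign⟩ := sign_pattern (V := V) h1
  set m := ⌊V - u⌋₊ with hm
  have hm1 : (m:ℝ) ≤ V - u := Nat.floor_le (by linarith)
  have hm2 : V - u < m + 1 := Nat.lt_floor_add_one _
  set Sg : Set ℝ := (fun s => F (s + m) / q ^ m) '' Set.Ico u γ with hSg
  have hbdd : BddAbove Sg := by
    refine ⟨1 / q ^ m, ?_⟩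
    rintro _ ⟨s, hs, rfl⟩
    have := F1 (s + m)
    simp only
    gcongr
  have hub : ∀ a, 0 ≤ a → (∀ s, u ≤ s → s < γ → F (s + m) / q ^ m ≤ a) → sSup Sg ≤ a := by
    intro a ha h
    apply Real.sSup_le _ ha
    rintro _ ⟨s, hs, rfl⟩
    exact h s hs.1 hs.2
  refine ⟨γ, sSup Sg, hu.trans huγ, hγ, ?_, ?_⟩
  · apply Real.sSup_nonneg
    rintro _ ⟨s, hs, rfl⟩
    exact div_nonneg (F0 _) (by positivity)
  intro s hs0 hs1
  obtain ⟨sA, sB, sC⟩ := hsign s hs0 hs1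
  have hqm : (0:ℝ) < q ^ m := by positivity
  by_cases c1 : s < u
  · refine ⟨F (s + (m + 1 : ℕ)) / q ^ (m + 1), div_nonneg (F0 _) (by positivity), m + 1, ?_, ?_, ?_⟩
    · push_cast; rw [abs_le]; constructor <;> linarith
    · simp only [stp, if_pos (c1.trans_le huγ)]
      field_simp
    · apply mul_nonneg _ (by linarith [sA c1])
      rw [sub_nonneg]
      apply hub _ (div_nonneg (F0 _) (by positivity))
      intro s' h1' h2'
      have := hF (s' + m) (s + (m + 1 : ℕ)) (by linarith [(Nat.cast_nonneg m : (0:ℝ) ≤ m)])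
        (by positivity) (by push_cast; rw [abs_le]; constructor <;> linarith)
      rw [div_le_div_iff₀ hqm (by positivity), pow_succ]
      nlinarith
  · push Not at c1
    by_cases c2 : s < γ
    · refine ⟨F (s + m) / q ^ m, div_nonneg (F0 _) hqm.le, m, ?_, ?_, ?_⟩
      · rw [abs_le]; constructor <;> linarith
      · simp only [stp, if_pos c2]
        field_simp
      · apply mul_nonneg_of_nonpos_of_nonpos _ (by linarith [sB c1 c2])
        rw [sub_nonpos]
        exact le_csSup hbdd ⟨s, ⟨c1, c2⟩, rfl⟩
    · push Not at c2
      refine ⟨F (s + m) / q ^ (m + 1), div_nonneg (F0 _) (by positivity), m, ?_, ?_, ?_⟩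
      · rw [abs_le]; constructor <;> linarith
      · simp only [stp, if_neg (not_lt.2 c2)]
        field_simp
        ring
      · apply mul_nonneg _ (by linarith [sC c2])
        rw [sub_nonneg]
        apply hub _ (div_nonneg (F0 _) (by positivity))
        intro s' h1' h2'
        have := hF (s' + m) (s + m) (by linarith [(Nat.cast_nonneg m : (0:ℝ) ≤ m)])
          (by positivity) (by rw [abs_le]; constructor <;> linarith)
        rw [div_le_div_iff₀ hqm (by positivity), pow_succ]
        nlinarith

lemma stp_nonneg {q : ℝ} (h0 : 0 < q) (γ s : ℝ) : 0 ≤ stp q γ s := by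
  unfold stp; split_ifs <;> linarith

lemma meas_stp (q γ : ℝ) : Measurable (stp q γ) := by
  unfold stp
  exact Measurable.ite measurableSet_Iio measurable_const measurable_const

lemma chain_ineq {q V : ℝ} (h0 : 0 < q) (h1 : q < 1) (hV : 1 ≤ V) (F : ℝ → ℝ) (F0 : ∀ r, 0 ≤ F r)
    (hF : ∀ r r', 0 ≤ r → 0 ≤ r' → |r - r'| ≤ 1 → q * F r ≤ F r') {γ cs s c : ℝ} (hcs : 0 ≤ cs)
    (hs : 0 ≤ s) (hc : 0 ≤ c) (j : ℕ) (hj : |s + j - V| ≤ 1)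
    (hC : (c * stp q γ s) * q ^ j = F (s + j)) (hsg : 0 ≤ (c - cs) * (p2 q s - V * p1 q s)) :
    ENNReal.ofReal V * (∑' k : ℕ, ENNReal.ofReal ((s + k) * F (s + k))) +
      ENNReal.ofReal (cs * (stp q γ s * p2 q s)) ≤
    (∑' k : ℕ, ENNReal.ofReal ((s + k) ^ 2 * F (s + k))) +
      ENNReal.ofReal (V * (cs * (stp q γ s * p1 q s))) := by
  have hw := stp_nonneg h0 γ s
  have hp1 := p1_nonneg h0 h1 hs
  have hp2 := p2_nonneg h0 h1 hs
  have hV0 : 0 ≤ V := by linarith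
  have e1 : ENNReal.ofReal V * (∑' k : ℕ, ENNReal.ofReal ((s + k) * F (s + k))) +
      ENNReal.ofReal ((c * stp q γ s) * p2 q s) ≤
    (∑' k : ℕ, ENNReal.ofReal ((s + k) ^ 2 * F (s + k))) +
      ENNReal.ofReal (V * ((c * stp q γ s) * p1 q s)) := by
    have hcw : 0 ≤ c * stp q γ s := mul_nonneg hc hw
    rw [ENNReal.ofReal_mul hV0, ← tsum_p1 h0 h1 hs hcw, ← tsum_p2 h0 h1 hs hcw,
      ← ENNReal.tsum_mul_left, ← ENNReal.tsum_mul_left, ← ENNReal.tsum_add, ← ENNReal.tsum_add]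
    apply ENNReal.tsum_le_tsum
    intro k
    have hk := chain_sign (V := V) h0 F hF s hs _ j hj hC k
    have hr : 0 ≤ s + k := by positivity
    have hFk := F0 (s + k)
    rw [← ENNReal.ofReal_mul hV0, ← ENNReal.ofReal_mul hV0, ← ENNReal.ofReal_add (by positivity) (by positivity),
      ← ENNReal.ofReal_add (by positivity) (by positivity)]
    apply ENNReal.ofReal_le_ofReal
    have := mul_nonneg hr hk
    nlinarith
  have e2 : ENNReal.ofReal (V * ((c * stp q γ s) * p1 q s)) + ENNReal.ofReal (cs * (stp q γ s * p2 q s)) ≤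
     ENNReal.ofReal ((c * stp q γ s) * p2 q s) + ENNReal.ofReal (V * (cs * (stp q γ s * p1 q s))) := by
    rw [← ENNReal.ofReal_add (by positivity) (by positivity),
      ← ENNReal.ofReal_add (by positivity) (by positivity)]
    apply ENNReal.ofReal_le_ofReal
    have := mul_nonneg hw hsg
    nlinarith
  have e3 := add_le_add e1 e2
  set X := ENNReal.ofReal V * (∑' k : ℕ, ENNReal.ofReal ((s + k) * F (s + k)))
  set Y := (∑' k : ℕ, ENNReal.ofReal ((s + k) ^ 2 * F (s + k)))
  set a := ENNReal.ofReal ((c * stp q γ s) * p2 q s) with ha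
  set b := ENNReal.ofReal (V * ((c * stp q γ s) * p1 q s)) with hb
  have hfin : a + b ≠ ⊤ := by simp [ha, hb]
  rw [← ENNReal.add_le_add_iff_left hfin]
  calc _ = _ := ?_
    _ ≤ _ := e3
    _ = _ := ?_
  · abel
  · abel

lemma ray {q V : ℝ} (h0 : 0 < q) (h1 : q < 1) (hV : 1 ≤ V)
    (hT : ∀ γ, 0 ≤ γ → γ ≤ 1 → V * DD q γ ≤ NN q γ)
    (F : ℝ → ℝ) (hFm : Measurable F) (F0 : ∀ r, 0 ≤ F r)
    (F1 : ∀ r, F r ≤ 1)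
    (hF : ∀ r r', 0 ≤ r → 0 ≤ r' → |r - r'| ≤ 1 → q * F r ≤ F r') :
    ENNReal.ofReal V * ∫⁻ r in Set.Ioi (0:ℝ), ENNReal.ofReal (r * F r) ≤
      ∫⁻ r in Set.Ioi (0:ℝ), ENNReal.ofReal (r ^ 2 * F r) := by
  obtain ⟨γ, cs, hγ0, hγ1, hcs, hp⟩ := pivot h0 h1 hV F F0 F1 hF
  have hV0 : 0 ≤ V := by linarith
  rw [fold_lint _ (by fun_prop), fold_lint _ (by fun_prop)]
  have key : ∫⁻ s in Set.Ico (0:ℝ) 1, (ENNReal.ofReal V * (∑' k : ℕ, ENNReal.ofReal ((s + k) * F (s + k))) +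
      ENNReal.ofReal (cs * (stp q γ s * p2 q s))) ≤ ∫⁻ s in Set.Ico (0:ℝ) 1,
    ((∑' k : ℕ, ENNReal.ofReal ((s + k) ^ 2 * F (s + k))) +
      ENNReal.ofReal (V * (cs * (stp q γ s * p1 q s)))) := by
    apply setLIntegral_mono' measurableSet_Ico
    intro s hs
    obtain ⟨c, hc, j, hj, hC, hsg⟩ := hp s hs.1 hs.2
    exact chain_ineq h0 h1 hV F F0 hF hcs hs.1 hc j hj hC hsg
  have m1 : Measurable (p1 q) := (cont_p1 q).measurable
  have m2 : Measurable (p2 q) := (cont_p2 q).measurable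
  have m3 := meas_stp q γ
  rw [lintegral_add_right _ (by fun_prop), lintegral_add_right _ (by fun_prop)] at key
  simp_rw [ENNReal.ofReal_mul hV0, ENNReal.ofReal_mul hcs] at key
  rw [lintegral_const_mul' _ _ ENNReal.ofReal_ne_top, lintegral_const_mul' _ _ ENNReal.ofReal_ne_top,
    lintegral_const_mul' _ _ ENNReal.ofReal_ne_top, lintegral_const_mul' _ _ ENNReal.ofReal_ne_top,
    lint_p1 hγ0 hγ1 h0 h1, lint_p2 hγ0 hγ1 h0 h1] at key
  have h2 : ENNReal.ofReal V * (ENNReal.ofReal cs * ENNReal.ofReal (DD q γ)) ≤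
      ENNReal.ofReal cs * ENNReal.ofReal (NN q γ) := by
    rw [← ENNReal.ofReal_mul hcs, ← ENNReal.ofReal_mul hcs, ← ENNReal.ofReal_mul hV0]
    apply ENNReal.ofReal_le_ofReal
    have := mul_le_mul_of_nonneg_left (hT γ hγ0 hγ1) hcs
    linarith
  have h3 := key.trans (add_le_add_right h2 _)
  rwa [ENNReal.add_le_add_iff_right (ENNReal.mul_ne_top ENNReal.ofReal_ne_top ENNReal.ofReal_ne_top)] at h3

lemma lint_scale (a : ℝ) (ha : 0 < a) (f : ℝ → ℝ≥0∞) (hf : Measurable f) :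
    ∫⁻ r in Set.Ioi (0:ℝ), f r = ENNReal.ofReal a * ∫⁻ r in Set.Ioi (0:ℝ), f (a * r) := by
  have h1 := Real.smul_map_volume_mul_left ha.ne'
  rw [abs_of_pos ha] at h1
  conv_lhs => rw [← h1]
  rw [Measure.restrict_smul, lintegral_smul_measure, smul_eq_mul,
    setLIntegral_map measurableSet_Ioi hf (measurable_const_mul a)]
  congr 3
  ext x
  simp [ha]

/-- the euclidean length of the point of ℓ¹ norm Δ in direction θ -/
def lam (Δ θ : ℝ) : ℝ := Δ / (|cos θ| + |sin θ|)

lemma one_le_n (θ : ℝ) : 1 ≤ |cos θ| + |sin θ| := by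
  have h1 := Real.cos_sq_add_sin_sq θ
  rw [← sq_abs (cos θ), ← sq_abs (sin θ)] at h1
  nlinarith [abs_nonneg (cos θ), abs_nonneg (sin θ), mul_nonneg (abs_nonneg (cos θ)) (abs_nonneg (sin θ))]

lemma n_le_two (θ : ℝ) : |cos θ| + |sin θ| ≤ 2 := by
  linarith [Real.abs_cos_le_one θ, Real.abs_sin_le_one θ]

lemma lam_pos {Δ : ℝ} (hΔ : 0 < Δ) (θ : ℝ) : 0 < lam Δ θ :=
  div_pos hΔ (by linarith [one_le_n θ])

lemma meas_lam (Δ : ℝ) : Measurable (lam Δ) := by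
  unfold lam; fun_prop

lemma l1_ray {Δ : ℝ} (hΔ : 0 < Δ) (θ r : ℝ) :
    l1 (r * (lam Δ θ * cos θ), r * (lam Δ θ * sin θ)) = Δ * |r| := by
  have := one_le_n θ
  have hl := lam_pos hΔ θ
  simp only [l1, abs_mul, abs_of_pos hl]
  have : lam Δ θ * (|cos θ| + |sin θ|) = Δ := by
    unfold lam; field_simp
  linear_combination |r| * this

lemma polar_l1 {Δ : ℝ} (hΔ : 0 < Δ) (G : ℝ × ℝ → ℝ≥0∞) (hG : Measurable G) :
    ∫⁻ x, G x = ∫⁻ θ in Set.Ioo (-π) π, ENNReal.ofReal (lam Δ θ ^ 2) *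
      ∫⁻ r in Set.Ioi (0:ℝ), ENNReal.ofReal r * G (r * (lam Δ θ * cos θ), r * (lam Δ θ * sin θ)) := by
  rw [← lintegral_comp_polarCoord_symm]
  have ht : polarCoord.target = Set.Ioi (0 : ℝ) ×ˢ Set.Ioo (-π) π := rfl
  have hs : ∀ p : ℝ × ℝ, polarCoord.symm p = (p.1 * cos p.2, p.1 * sin p.2) := fun p => rfl
  rw [ht, Measure.volume_eq_prod, ← Measure.prod_restrict]
  simp_rw [hs, smul_eq_mul]
  rw [lintegral_prod_symm' _ (by fun_prop)]
  apply lintegral_congr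
  intro θ
  have hl := lam_pos hΔ θ
  simp only
  rw [lint_scale (lam Δ θ) hl _ (by fun_prop), sq, ENNReal.ofReal_mul hl.le, mul_assoc]
  congr 1
  rw [← lintegral_const_mul' _ _ ENNReal.ofReal_ne_top]
  apply lintegral_congr
  intro r
  rw [← mul_assoc, ENNReal.ofReal_mul hl.le]
  congr 3 <;> ring

lemma l1_add_le (x y : ℝ × ℝ) : l1 (x + y) ≤ l1 x + l1 y := by
  unfold l1
  have := abs_add_le x.1 y.1
  have := abs_add_le x.2 y.2
  simp only [Prod.fst_add, Prod.snd_add]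
  linarith

lemma meas_l1 : Measurable l1 := by unfold l1; fun_prop

lemma l1_nonneg (x : ℝ × ℝ) : 0 ≤ l1 x := by unfold l1; positivity

lemma lower_smooth {Δ ε V δ : ℝ} (hΔ : 0 < Δ) (hε : 0 < ε) (hV : 1 ≤ V) (hδ : 0 < δ)
    (hT : ∀ γ, 0 ≤ γ → γ ≤ 1 → V * DD (exp (-ε)) γ ≤ NN (exp (-ε)) γ)
    (μ : Measure (ℝ × ℝ)) [IsProbabilityMeasure μ] (hμ : DPC ε Δ μ) :
    ENNReal.ofReal (Δ * V) ≤ cost μ + ENNReal.ofReal (2 * δ) := by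
  set g : ℝ × ℝ → ℝ≥0∞ := fun x => μ (Metric.closedBall x δ) with hg
  have hms : MeasurableSet {p : (ℝ × ℝ) × (ℝ × ℝ) | dist p.2 p.1 ≤ δ} :=
    (isClosed_le (by fun_prop) (by fun_prop)).measurableSet
  have hgm : Measurable g := measurable_measure_prodMk_left hms
  have hgDP : ∀ x y : ℝ × ℝ, l1 (y - x) ≤ Δ → g x ≤ ENNReal.ofReal (exp ε) * g y := by
    intro x y h
    have := hμ (Metric.closedBall x δ) Metric.isClosed_closedBall.measurableSet (y - x) h
    have e : (fun z => z + (y - x)) '' Metric.closedBall x δ = Metric.closedBall y δ := by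
      ext z
      simp only [Set.image_add_right, Set.mem_preimage, Metric.mem_closedBall, dist_eq_norm]
      have : z + -(y - x) - x = z - y := by abel
      rw [this]
    rwa [e] at this
  have hq1 : exp (-ε) < 1 := by rw [Real.exp_lt_one_iff]; linarith
  -- the radial inequality
  have step1 : ENNReal.ofReal V * ∫⁻ x, g x ≤ ∫⁻ x, ENNReal.ofReal (l1 x / Δ) * g x := by
    have hl := meas_l1
    rw [polar_l1 hΔ g hgm, polar_l1 hΔ _ (by fun_prop), ← lintegral_const_mul' _ _ ENNReal.ofReal_ne_top]
    apply lintegral_mono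
    intro θ
    simp only
    rw [mul_left_comm]
    gcongr
    set F : ℝ → ℝ := fun r => (g (r * (lam Δ θ * cos θ), r * (lam Δ θ * sin θ))).toReal with hF
    have hfin : ∀ x, g x ≠ ⊤ := fun x => measure_ne_top _ _
    have hr := ray (q := exp (-ε)) (exp_pos _) hq1 hV hT F (by fun_prop) (fun r => ENNReal.toReal_nonneg) ?_ ?_
    · calc _ = _ := ?_
        _ ≤ _ := hr
        _ = _ := ?_
      · congr 1
        apply setLIntegral_congr_fun measurableSet_Ioi
        intro r hr
        have hr : (0:ℝ) < r := hr
        simp only [hF]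
        rw [ENNReal.ofReal_mul hr.le, ENNReal.ofReal_toReal (hfin _)]
      · apply setLIntegral_congr_fun measurableSet_Ioi
        intro r hr
        have hr : (0:ℝ) < r := hr
        simp only [hF]
        rw [ENNReal.ofReal_mul (by positivity), ENNReal.ofReal_toReal (hfin _), l1_ray hΔ,
          ← mul_assoc (ENNReal.ofReal r), ← ENNReal.ofReal_mul hr.le, abs_of_pos hr]
        congr 2
        field_simp
    · intro r
      simp only [hF]
      exact ENNReal.toReal_mono ENNReal.one_ne_top prob_le_one |>.trans_eq ENNReal.toReal_one
    · intro r r' _ _ hrr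
      simp only [hF]
      have h := hgDP (r * (lam Δ θ * cos θ), r * (lam Δ θ * sin θ))
        (r' * (lam Δ θ * cos θ), r' * (lam Δ θ * sin θ)) (by
          have e : ((r' * (lam Δ θ * cos θ), r' * (lam Δ θ * sin θ)) : ℝ × ℝ) -
            (r * (lam Δ θ * cos θ), r * (lam Δ θ * sin θ)) =
            ((r' - r) * (lam Δ θ * cos θ), (r' - r) * (lam Δ θ * sin θ)) := by
            ext <;> simp <;> ring
          rw [e, l1_ray hΔ, abs_sub_comm]
          nlinarith)
      have h2 := ENNReal.toReal_mono (ENNReal.mul_ne_top ENNReal.ofReal_ne_top (hfin _)) h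
      rw [ENNReal.toReal_mul, ENNReal.toReal_ofReal (exp_pos _).le] at h2
      have := mul_le_mul_of_nonneg_left h2 (exp_pos (-ε)).le
      rw [← mul_assoc (exp (-ε)) (exp ε), ← Real.exp_add] at this
      simpa using this
  set b := volume (Metric.closedBall (0 : ℝ × ℝ) δ) with hb
  have hb0 : b ≠ 0 := (Metric.measure_closedBall_pos _ _ hδ).ne'
  have hbt : b ≠ ⊤ := measure_closedBall_lt_top.ne
  have hvol : ∀ y : ℝ × ℝ, volume (Metric.closedBall y δ) = b := fun y =>
    Measure.addHaar_closedBall_center _ _ _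
  have swap : ∀ H : ℝ × ℝ → ℝ≥0∞, Measurable H →
      ∫⁻ x, H x * g x = ∫⁻ y, (∫⁻ x in Metric.closedBall y δ, H x) ∂μ := by
    intro H hH
    have e1 : ∀ x, H x * g x = ∫⁻ y, (Set.indicator {p : (ℝ × ℝ) × (ℝ × ℝ) | dist p.2 p.1 ≤ δ}
        (fun p => H p.1)) (x, y) ∂μ := by
      intro x
      have : (fun y => (Set.indicator {p : (ℝ × ℝ) × (ℝ × ℝ) | dist p.2 p.1 ≤ δ}
        (fun p => H p.1)) (x, y)) = Set.indicator (Metric.closedBall x δ) (fun _ => H x) := by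
        ext y; simp [Set.indicator]
      rw [this, lintegral_indicator_const Metric.isClosed_closedBall.measurableSet]
    simp_rw [e1]
    rw [lintegral_lintegral_swap]
    · apply lintegral_congr
      intro y
      rw [← lintegral_indicator Metric.isClosed_closedBall.measurableSet]
      apply lintegral_congr
      intro x
      simp [Set.indicator, dist_comm]
    · exact (Measurable.indicator (hH.comp measurable_fst) hms).aemeasurable
  have i1 : ∫⁻ x, g x = b := by
    have := swap (fun _ => 1) measurable_const
    simp only [one_mul, lintegral_const, Measure.restrict_apply_univ, hvol, measure_univ, mul_one] at this
    exact this
  have i2 : ∫⁻ x, ENNReal.ofReal (l1 x / Δ) * g x ≤ b * ((cost μ + ENNReal.ofReal (2 * δ)) / ENNReal.ofReal Δ) := by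
    have hl := meas_l1
    rw [swap _ (by fun_prop)]
    calc _ ≤ ∫⁻ y, b * ((ENNReal.ofReal (l1 y) + ENNReal.ofReal (2 * δ)) / ENNReal.ofReal Δ) ∂μ := ?_
      _ = _ := ?_
    · apply lintegral_mono
      intro y
      calc _ ≤ ∫⁻ x in Metric.closedBall y δ, ENNReal.ofReal ((l1 y + 2 * δ) / Δ) := ?_
        _ = _ := ?_
      · apply setLIntegral_mono' Metric.isClosed_closedBall.measurableSet
        intro x hx
        apply ENNReal.ofReal_le_ofReal
        gcongr
        have h1 := l1_add_le y (x - y)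
        rw [add_sub_cancel] at h1
        have h2 : l1 (x - y) ≤ 2 * δ := by
          rw [Metric.mem_closedBall, dist_eq_norm, Prod.norm_def, max_le_iff] at hx
          simp only [Real.norm_eq_abs] at hx
          unfold l1; linarith [hx.1, hx.2]
        linarith
      · simp only [lintegral_const, Measure.restrict_apply_univ, hvol]
        rw [ENNReal.ofReal_div_of_pos hΔ, ENNReal.ofReal_add (l1_nonneg y) (by positivity), mul_comm]
    · rw [lintegral_const_mul' _ _ hbt]
      simp_rw [div_eq_mul_inv]
      rw [lintegral_mul_const' _ _ (by simp [hΔ]), lintegral_add_right _ measurable_const]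
      simp [cost]
  rw [i1, mul_comm] at step1
  have := step1.trans i2
  rw [ENNReal.mul_le_mul_iff_right hb0 hbt, ENNReal.le_div_iff_mul_le (by simp [hΔ]) (by simp)] at this
  rwa [ENNReal.ofReal_mul hΔ.le, mul_comm (ENNReal.ofReal Δ)]

lemma lower {Δ ε V : ℝ} (hΔ : 0 < Δ) (hε : 0 < ε) (hV : 1 ≤ V)
    (hT : ∀ γ, 0 ≤ γ → γ ≤ 1 → V * DD (exp (-ε)) γ ≤ NN (exp (-ε)) γ) :
    ENNReal.ofReal (Δ * V) ≤ Vstar Δ ε := by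
  unfold Vstar
  refine le_iInf₂ fun μ hμ => ?_
  obtain ⟨h1, h2⟩ := hμ
  apply ENNReal.le_of_forall_pos_le_add
  intro δ hδ _
  have := lower_smooth (δ := (δ:ℝ) / 2) hΔ hε hV (by positivity) hT μ h2
  rwa [mul_div_cancel₀ _ (two_ne_zero), ENNReal.ofReal_coe_nnreal] at this

/-- staircase profile -/
def stair (q γ r : ℝ) : ℝ := q ^ ⌊r + 1 - γ⌋₊

lemma stair_eq {q γ s : ℝ} (hγ0 : 0 ≤ γ) (hγ1 : γ ≤ 1) (hs0 : 0 ≤ s) (hs1 : s < 1) (k : ℕ) :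
    stair q γ (s + k) = stp q γ s * q ^ k := by
  unfold stair stp
  split_ifs with h
  · have : ⌊s + k + 1 - γ⌋₊ = k := by
      rw [Nat.floor_eq_iff (by linarith [(Nat.cast_nonneg k : (0:ℝ) ≤ k)])]
      constructor <;> linarith
    rw [this, one_mul]
  · have : ⌊s + k + 1 - γ⌋₊ = k + 1 := by
      rw [Nat.floor_eq_iff (by linarith [(Nat.cast_nonneg k : (0:ℝ) ≤ k)])]
      push_cast
      constructor <;> linarith
    rw [this, pow_succ, mul_comm]

lemma stair_DP {q γ r r' : ℝ} (h0 : 0 < q) (h1 : q < 1) (hγ1 : γ ≤ 1) (hr : 0 ≤ r)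
    (h : r' ≤ r + 1) : q * stair q γ r ≤ stair q γ r' := by
  unfold stair
  rw [← pow_succ']
  apply pow_le_pow_of_le_one h0.le h1.le
  rw [← Nat.floor_add_one (by linarith)]
  apply Nat.floor_mono
  linarith

lemma meas_stair (q γ : ℝ) : Measurable (stair q γ) := by
  unfold stair
  have : Measurable (fun r : ℝ => ⌊r + 1 - γ⌋₊) := Nat.measurable_floor.comp (by fun_prop)
  exact (measurable_from_top (f := fun n : ℕ => q ^ n)).comp this

lemma lint_stair1 {q γ : ℝ} (hγ0 : 0 ≤ γ) (hγ1 : γ ≤ 1) (h0 : 0 < q) (h1 : q < 1) :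
    ∫⁻ r in Set.Ioi (0:ℝ), ENNReal.ofReal (r * stair q γ r) = ENNReal.ofReal (DD q γ) := by
  have := meas_stair q γ
  rw [fold_lint _ (by fun_prop), ← lint_p1 hγ0 hγ1 h0 h1]
  apply setLIntegral_congr_fun measurableSet_Ico
  intro s hs
  simp only
  simp_rw [stair_eq hγ0 hγ1 hs.1 hs.2]
  exact tsum_p1 h0 h1 hs.1 (stp_nonneg h0 _ _)

lemma lint_stair2 {q γ : ℝ} (hγ0 : 0 ≤ γ) (hγ1 : γ ≤ 1) (h0 : 0 < q) (h1 : q < 1) :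
    ∫⁻ r in Set.Ioi (0:ℝ), ENNReal.ofReal (r ^ 2 * stair q γ r) = ENNReal.ofReal (NN q γ) := by
  have := meas_stair q γ
  rw [fold_lint _ (by fun_prop), ← lint_p2 hγ0 hγ1 h0 h1]
  apply setLIntegral_congr_fun measurableSet_Ico
  intro s hs
  simp only
  simp_rw [stair_eq hγ0 hγ1 hs.1 hs.2]
  exact tsum_p2 h0 h1 hs.1 (stp_nonneg h0 _ _)

lemma DD_pos {q γ : ℝ} (hγ0 : 0 ≤ γ) (h0 : 0 < q) (h1 : q < 1) : 0 < DD q γ := by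
  have : 0 < 1 - q := by linarith
  unfold DD; positivity

lemma upper {Δ ε γ : ℝ} (hΔ : 0 < Δ) (hε : 0 < ε) (hγ0 : 0 ≤ γ) (hγ1 : γ ≤ 1) :
    Vstar Δ ε ≤ ENNReal.ofReal (Δ * (NN (exp (-ε)) γ / DD (exp (-ε)) γ)) := by
  set q := exp (-ε) with hq
  have h0 : 0 < q := exp_pos _
  have h1 : q < 1 := by rw [hq, Real.exp_lt_one_iff]; linarith
  have hst0 : ∀ r, 0 ≤ stair q γ r := fun r => by unfold stair; positivity
  set f : ℝ × ℝ → ℝ≥0∞ := fun x => ENNReal.ofReal (stair q γ (l1 x / Δ)) with hf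
  have hms := meas_stair q γ
  have hml := meas_l1
  have hfm : Measurable f := by
    have : Measurable (fun x => stair q γ (l1 x / Δ)) := hms.comp (by fun_prop)
    exact this.ennreal_ofReal
  set K : ℝ≥0∞ := ∫⁻ θ in Set.Ioo (-π) π, ENNReal.ofReal (lam Δ θ ^ 2) with hK
  have hDD := DD_pos hγ0 h0 h1
  have hKt : K ≠ ⊤ := by
    apply ne_of_lt
    calc K ≤ ∫⁻ θ in Set.Ioo (-π) π, ENNReal.ofReal (Δ ^ 2) := by
          apply lintegral_mono
          intro θ
          apply ENNReal.ofReal_le_ofReal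
          have := lam_pos hΔ θ
          gcongr
          exact div_le_self hΔ.le (one_le_n θ)
      _ < ⊤ := by
          rw [lintegral_const]
          exact ENNReal.mul_lt_top ENNReal.ofReal_lt_top (by simp)
  have hK0 : K ≠ 0 := by
    apply ne_of_gt
    calc (0:ℝ≥0∞) < ∫⁻ θ in Set.Ioo (-π) π, ENNReal.ofReal ((Δ / 2) ^ 2) := by
          rw [lintegral_const]
          apply ENNReal.mul_pos
          · simp [hΔ.ne', hΔ]
          · simp [Real.pi_pos]
      _ ≤ K := by
          apply lintegral_mono
          intro θ
          apply ENNReal.ofReal_le_ofReal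
          unfold lam
          have := one_le_n θ
          gcongr
          exact n_le_two θ
  have hZ : ∫⁻ x, f x = K * ENNReal.ofReal (DD q γ) := by
    rw [polar_l1 hΔ f hfm, hK, ← lintegral_mul_const' _ _ ENNReal.ofReal_ne_top]
    apply lintegral_congr
    intro θ
    congr 1
    rw [← lint_stair1 hγ0 hγ1 h0 h1]
    apply setLIntegral_congr_fun measurableSet_Ioi
    intro r hr
    have hr : (0:ℝ) < r := hr
    simp only [hf]
    rw [l1_ray hΔ, abs_of_pos hr, mul_div_cancel_left₀ _ hΔ.ne', ENNReal.ofReal_mul hr.le]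
  have hC : ∫⁻ x, f x * ENNReal.ofReal (l1 x) = K * ENNReal.ofReal (Δ * NN q γ) := by
    rw [polar_l1 hΔ _ (by fun_prop), hK, ← lintegral_mul_const' _ _ ENNReal.ofReal_ne_top]
    apply lintegral_congr
    intro θ
    congr 1
    rw [ENNReal.ofReal_mul hΔ.le, ← lint_stair2 hγ0 hγ1 h0 h1,
      ← lintegral_const_mul' _ _ ENNReal.ofReal_ne_top]
    apply setLIntegral_congr_fun measurableSet_Ioi
    intro r hr
    have hr : (0:ℝ) < r := hr
    simp only [hf]
    rw [l1_ray hΔ, abs_of_pos hr, mul_div_cancel_left₀ _ hΔ.ne',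
      ← ENNReal.ofReal_mul (hst0 _), ← ENNReal.ofReal_mul hr.le, ← ENNReal.ofReal_mul hΔ.le]
    congr 1
    ring
  set Z := ∫⁻ x, f x with hZd
  have hZ0 : Z ≠ 0 := by
    rw [hZ]; exact mul_ne_zero hK0 (by simp [hDD])
  have hZt : Z ≠ ⊤ := by
    rw [hZ]; exact ENNReal.mul_ne_top hKt ENNReal.ofReal_ne_top
  set μ : Measure (ℝ × ℝ) := Z⁻¹ • volume.withDensity f with hμ
  have hprob : IsProbabilityMeasure μ := by
    constructor
    rw [hμ, Measure.smul_apply, withDensity_apply _ MeasurableSet.univ, Measure.restrict_univ,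
      smul_eq_mul]
    exact ENNReal.inv_mul_cancel hZ0 hZt
  have hDP : DPC ε Δ μ := by
    intro S hS t ht
    have himg : (fun z => z + t) '' S = (fun z => z + -t) ⁻¹' S := by
      rw [Set.image_add_right]
    have hSt : MeasurableSet ((fun z => z + t) '' S) := by
      rw [himg]; exact (measurable_add_const (-t)) hS
    rw [hμ, Measure.smul_apply, Measure.smul_apply, withDensity_apply _ hS, withDensity_apply _ hSt,
      smul_eq_mul, smul_eq_mul, mul_left_comm]
    gcongr
    have hmp := (measurePreserving_add_right (volume : Measure (ℝ × ℝ)) t).setLIntegral_comp_emb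
      (measurableEmbedding_addRight t) f S
    rw [← hmp, ← lintegral_const_mul' _ _ ENNReal.ofReal_ne_top]
    apply lintegral_mono
    intro x
    simp only [hf]
    rw [← ENNReal.ofReal_mul (exp_pos _).le]
    apply ENNReal.ofReal_le_ofReal
    have h := stair_DP (r := l1 x / Δ) (r' := l1 (x + t) / Δ) h0 h1 hγ1
      (div_nonneg (l1_nonneg x) hΔ.le) (by
        have := l1_add_le x t
        rw [div_le_iff₀ hΔ, add_mul, div_mul_cancel₀ _ hΔ.ne']
        linarith)
    have h' := mul_le_mul_of_nonneg_left h (exp_pos ε).le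
    rw [← mul_assoc (exp ε) q, hq, ← Real.exp_add] at h'
    simpa using h'
  have hcost : cost μ = ENNReal.ofReal (Δ * (NN q γ / DD q γ)) := by
    unfold cost
    rw [hμ, lintegral_smul_measure, lintegral_withDensity_eq_lintegral_mul _ hfm (by fun_prop)]
    simp only [Pi.mul_apply, smul_eq_mul]
    rw [hC, hZ, mul_comm, ← div_eq_mul_inv, ENNReal.mul_div_mul_left _ _ hK0 hKt,
      ← ENNReal.ofReal_div_of_pos hDD, mul_div_assoc]
  rw [← hcost]
  unfold Vstar
  exact iInf₂_le μ ⟨hprob, hDP⟩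

/-- Taylor remainder -/
def rr (x : ℝ) : ℝ := (exp (-x) - (1 - x + x ^ 2 / 2 - x ^ 3 / 6 + x ^ 4 / 24)) / x ^ 4

lemma rr_tendsto : Tendsto rr (𝓝[>] 0) (𝓝 0) := by
  have hb : ∀ᶠ x : ℝ in 𝓝[>] 0, |rr x| ≤ x := by
    filter_upwards [Ioo_mem_nhdsGT (zero_lt_one : (0:ℝ) < 1)] with x hx
    have h := Real.exp_bound (x := -x) (by rw [abs_neg, abs_of_pos hx.1]; exact hx.2.le) (n := 5) (by norm_num)
    rw [abs_neg, abs_of_pos hx.1] at h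
    have e : ∑ m ∈ Finset.range 5, (-x) ^ m / (m.factorial : ℝ) =
      1 - x + x ^ 2 / 2 - x ^ 3 / 6 + x ^ 4 / 24 := by
      simp [Finset.sum_range_succ, Nat.factorial]
      ring
    rw [e] at h
    unfold rr
    have hx4 : 0 < x ^ 4 := pow_pos hx.1 4
    rw [abs_div, abs_of_pos hx4, div_le_iff₀ hx4]
    refine h.trans ?_
    have : x * x ^ 4 = x ^ 5 * 1 := by ring
    rw [this]
    apply mul_le_mul_of_nonneg_left _ (pow_pos hx.1 5).le
    norm_num [Nat.factorial]
  have hid : Tendsto (fun x : ℝ => x) (𝓝[>] 0) (𝓝 0) := tendsto_id.mono_left nhdsWithin_le_nhds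
  exact squeeze_zero_norm' (by simpa only [Real.norm_eq_abs] using hb) hid

/-- (1 - q)/x -/
def AA (x r : ℝ) : ℝ := 1 - x / 2 + x ^ 2 / 6 - x ^ 3 / 24 - x ^ 3 * r
/-- q -/
def QQ (x r : ℝ) : ℝ := 1 - x * AA x r
/-- coefficient -/
def K2 (x r : ℝ) : ℝ := -1 / 2 + x / 3 - x ^ 2 / 8 + x ^ 3 / 24 + x ^ 3 * r + x ^ 2 * r
/-- coefficient -/
def K1 (x r : ℝ) : ℝ := 1 / 6 - x / 12 + x ^ 2 / 24 + x ^ 2 * r + 2 * x * r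
/-- coefficient -/
def K0 (x r : ℝ) : ℝ := 2 * r + x / 36 + ((1 / 24 + r) / 3 - 1 / 36) * x ^ 2 + x ^ 3 / 108 +
  ((1 / 24 + r) ^ 2 - (1 / 24 + r) / 9) * x ^ 4 + (1 / 24 + r) ^ 2 / 3 * x ^ 5
/-- normalized error -/
def EE (x r γ : ℝ) : ℝ := QQ x r * K0 x r + AA x r * QQ x r * K1 x r * γ + AA x r ^ 2 * K2 x r * γ ^ 2 +
  AA x r ^ 3 / 3 * γ ^ 3
/-- normalized denominator -/
def PP (x r γ : ℝ) : ℝ := (x * AA x r) ^ 2 * γ ^ 2 / 2 + (x * AA x r) * γ * QQ x r +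
  QQ x r * (x * AA x r) / 2 + QQ x r ^ 2

lemma K2_eq (x r : ℝ) : x * K2 x r = QQ x r - AA x r := by unfold K2 QQ AA; ring
lemma K1_eq (x r : ℝ) : x ^ 2 * K1 x r = 1 + QQ x r - 2 * AA x r := by unfold K1 QQ AA; ring
lemma K0_eq (x r : ℝ) : x ^ 3 * K0 x r = x ^ 2 * AA x r ^ 2 / 3 + 2 * QQ x r - AA x r * (1 + QQ x r) := by
  unfold K0 QQ AA; ring

lemma QQ_rr {x : ℝ} (hx : 0 < x) : QQ x (rr x) = exp (-x) := by
  unfold QQ AA rr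
  field_simp
  ring

lemma AA_pos {x : ℝ} (hx : 0 < x) : 0 < AA x (rr x) := by
  have h := QQ_rr hx
  have h1 : exp (-x) < 1 := by rw [Real.exp_lt_one_iff]; linarith
  rw [← h] at h1
  unfold QQ at h1
  by_contra hc
  push Not at hc
  nlinarith

lemma DD_eq {x γ : ℝ} (hx : 0 < x) :
    DD (exp (-x)) γ = PP x (rr x) γ / (x ^ 2 * AA x (rr x) ^ 2) := by
  have hA := AA_pos hx
  rw [← QQ_rr hx]
  unfold DD PP QQ
  generalize AA x (rr x) = a at *
  have : 1 - (1 - x * a) = x * a := by ring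
  rw [this]
  field_simp
  ring

lemma NN_eq {x γ : ℝ} (hx : 0 < x) :
    NN (exp (-x)) γ - 2 / x * DD (exp (-x)) γ = EE x (rr x) γ / AA x (rr x) ^ 3 := by
  have hA := AA_pos hx
  rw [← QQ_rr hx]
  have e2 := K2_eq x (rr x)
  have e1 := K1_eq x (rr x)
  have e0 := K0_eq x (rr x)
  have hE : EE x (rr x) γ = (QQ x (rr x) * (x ^ 3 * K0 x (rr x)) +
      x * AA x (rr x) * QQ x (rr x) * (x ^ 2 * K1 x (rr x)) * γ +
      x ^ 2 * AA x (rr x) ^ 2 * (x * K2 x (rr x)) * γ ^ 2 + x ^ 3 * AA x (rr x) ^ 3 / 3 * γ ^ 3) / x ^ 3 := by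
    unfold EE; field_simp
  rw [hE, e0, e1, e2]
  unfold NN DD QQ
  generalize AA x (rr x) = a at *
  have : 1 - (1 - x * a) = x * a := by ring
  rw [this]
  field_simp
  ring

lemma tend_poly (f : ℝ → ℝ → ℝ) (hf : Continuous (fun p : ℝ × ℝ => f p.1 p.2)) :
    Tendsto (fun x => f x (rr x)) (𝓝[>] 0) (𝓝 (f 0 0)) := by
  have hid : Tendsto (fun x : ℝ => x) (𝓝[>] 0) (𝓝 0) := tendsto_id.mono_left nhdsWithin_le_nhds
  have := (hf.tendsto (0, 0)).comp (hid.prodMk_nhds rr_tendsto)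
  exact this

/-- the constant -/
def cc : ℝ := 1 / (36 * √3)

lemma cc_pos : 0 < cc := by unfold cc; positivity

lemma B3_bound {γ : ℝ} (h0 : 0 ≤ γ) : 0 ≤ γ / 6 - γ ^ 2 / 2 + γ ^ 3 / 3 + cc := by
  obtain ⟨t, ht0, ht2, htc⟩ : ∃ t : ℝ, 0 < t ∧ t ^ 2 = 1 / 3 ∧ cc = t / 36 := by
    refine ⟨1 / √3, by positivity, ?_, ?_⟩
    · rw [div_pow, Real.sq_sqrt (by norm_num)]; norm_num
    · unfold cc; field_simp
  have ht : 1 / 2 ≤ t := by nlinarith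
  have h : 0 ≤ (γ - 1 / 2 - t / 2) ^ 2 * (γ - 1 / 2 + t) := mul_nonneg (sq_nonneg _) (by linarith)
  rw [htc]
  have e : (γ - 1 / 2 - t / 2) ^ 2 * (γ - 1 / 2 + t) =
      (γ - 1 / 2) ^ 3 - 3 / 4 * t ^ 2 * (γ - 1 / 2) + t * t ^ 2 / 4 := by ring
  rw [e, ht2] at h
  nlinarith

lemma B3_exact : ∃ γ : ℝ, 0 ≤ γ ∧ γ ≤ 1 ∧ γ / 6 - γ ^ 2 / 2 + γ ^ 3 / 3 = -cc := by
  obtain ⟨t, ht0, ht2, htc⟩ : ∃ t : ℝ, 0 < t ∧ t ^ 2 = 1 / 3 ∧ cc = t / 36 := by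
    refine ⟨1 / √3, by positivity, ?_, ?_⟩
    · rw [div_pow, Real.sq_sqrt (by norm_num)]; norm_num
    · unfold cc; field_simp
  refine ⟨1 / 2 + t / 2, by linarith, by nlinarith, ?_⟩
  rw [htc]
  have e : (1 / 2 + t / 2) / 6 - (1 / 2 + t / 2) ^ 2 / 2 + (1 / 2 + t / 2) ^ 3 / 3 =
    t * t ^ 2 / 24 - t / 24 := by ring
  rw [e, ht2]; ring

lemma eventually_lower {δ : ℝ} (hδ : 0 < δ) :
    ∀ᶠ x : ℝ in 𝓝[>] 0, 1 ≤ 2 / x - (cc + δ) * x ^ 2 ∧ ∀ γ, 0 ≤ γ → γ ≤ 1 →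
      (2 / x - (cc + δ) * x ^ 2) * DD (exp (-x)) γ ≤ NN (exp (-x)) γ := by
  have hκ : 0 < cc + δ := by linarith [cc_pos]
  set κ := cc + δ with hκd
  have t0 := tend_poly (fun x r => QQ x r * K0 x r) (by unfold QQ K0 AA; fun_prop)
  have t1 := tend_poly (fun x r => AA x r * QQ x r * K1 x r) (by unfold QQ K1 AA; fun_prop)
  have t2 := tend_poly (fun x r => AA x r ^ 2 * K2 x r) (by unfold K2 AA; fun_prop)
  have t3 := tend_poly (fun x r => AA x r ^ 3 / 3) (by unfold AA; fun_prop)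
  have t4 := tend_poly (fun x r => AA x r * QQ x r ^ 2) (by unfold QQ AA; fun_prop)
  have v0 : QQ 0 0 * K0 0 0 = 0 := by norm_num [QQ, K0, AA]
  have v1 : AA 0 0 * QQ 0 0 * K1 0 0 = 1 / 6 := by norm_num [QQ, K1, AA]
  have v2 : AA 0 0 ^ 2 * K2 0 0 = -1 / 2 := by norm_num [K2, AA]
  have v3 : AA 0 0 ^ 3 / 3 = 1 / 3 := by norm_num [AA]
  have v4 : AA 0 0 * QQ 0 0 ^ 2 = 1 := by norm_num [QQ, AA]
  rw [v0] at t0; rw [v1] at t1; rw [v2] at t2; rw [v3] at t3; rw [v4] at t4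
  have hd8 : 0 < δ / 8 := by linarith
  filter_upwards [t0.eventually_const_lt (u := 0 - δ / 8) (by linarith),
    t1.eventually_const_lt (u := 1 / 6 - δ / 8) (by linarith),
    t2.eventually_const_lt (u := -1 / 2 - δ / 8) (by linarith),
    t3.eventually_const_lt (u := 1 / 3 - δ / 8) (by linarith),
    t4.eventually_const_lt (u := 1 - δ / (2 * κ)) (by linarith [div_pos hδ (mul_pos two_pos hκ)]),
    Ioo_mem_nhdsGT (lt_min one_pos (one_div_pos.2 (by linarith : 0 < κ + 1)))] with x h0 h1 h2 h3 h4 hx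
  have hx0 : 0 < x := hx.1
  have hx1 : x < 1 := hx.2.trans_le (min_le_left _ _)
  have hx2 : x < 1 / (κ + 1) := hx.2.trans_le (min_le_right _ _)
  constructor
  · have : κ + 1 ≤ 1 / x := by
      rw [le_div_iff₀ hx0]
      rw [lt_div_iff₀ (by linarith)] at hx2
      linarith
    have e : 2 / x = 1 / x + 1 / x := by ring
    have hx2' : x ^ 2 ≤ 1 := by nlinarith
    have : κ * x ^ 2 ≤ κ := by
      have := mul_le_mul_of_nonneg_left hx2' hκ.le
      linarith
    rw [e]; linarith
  · intro γ g0 g1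
    have hA := AA_pos hx0
    have hN := NN_eq (γ := γ) hx0
    have hD := DD_eq (γ := γ) hx0
    have hQ : 0 < QQ x (rr x) := by rw [QQ_rr hx0]; exact exp_pos _
    have hE : γ / 6 - γ ^ 2 / 2 + γ ^ 3 / 3 - δ / 2 ≤ EE x (rr x) γ := by
      unfold EE
      have g2 : γ ^ 2 ≤ 1 := by nlinarith
      have g3 : γ ^ 3 ≤ 1 := by nlinarith
      have g20 : 0 ≤ γ ^ 2 := by positivity
      have g30 : 0 ≤ γ ^ 3 := by positivity
      have a1 := mul_le_mul_of_nonneg_right h1.le g0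
      have a2 := mul_le_mul_of_nonneg_right h2.le g20
      have a3 := mul_le_mul_of_nonneg_right h3.le g30
      nlinarith
    have hP : 1 - δ / (2 * κ) ≤ AA x (rr x) * PP x (rr x) γ := by
      refine h4.le.trans ?_
      apply mul_le_mul_of_nonneg_left _ hA.le
      unfold PP
      have : 0 ≤ (x * AA x (rr x)) ^ 2 * γ ^ 2 / 2 := by positivity
      have : 0 ≤ (x * AA x (rr x)) * γ * QQ x (rr x) := by positivity
      have : 0 ≤ QQ x (rr x) * (x * AA x (rr x)) / 2 := by positivity
      linarith
    have hP' : κ - δ / 2 ≤ κ * (AA x (rr x) * PP x (rr x) γ) := by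
      refine le_trans (le_of_eq ?_) (mul_le_mul_of_nonneg_left hP hκ.le)
      field_simp
    have hB := B3_bound g0
    have hfin : 0 ≤ EE x (rr x) γ + κ * (AA x (rr x) * PP x (rr x) γ) := by linarith
    have e : NN (exp (-x)) γ - (2 / x - κ * x ^ 2) * DD (exp (-x)) γ =
        (EE x (rr x) γ + κ * (AA x (rr x) * PP x (rr x) γ)) / AA x (rr x) ^ 3 := by
      have : NN (exp (-x)) γ - (2 / x - κ * x ^ 2) * DD (exp (-x)) γ =
        (NN (exp (-x)) γ - 2 / x * DD (exp (-x)) γ) + κ * x ^ 2 * DD (exp (-x)) γ := by ring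
      rw [this, hN, hD]
      field_simp
    have : 0 ≤ NN (exp (-x)) γ - (2 / x - κ * x ^ 2) * DD (exp (-x)) γ := by
      rw [e]; positivity
    linarith

lemma upper_tendsto (γ : ℝ) (g0 : 0 ≤ γ) :
    Tendsto (fun x : ℝ => (NN (exp (-x)) γ / DD (exp (-x)) γ - 2 / x) / x ^ 2) (𝓝[>] 0)
      (𝓝 (γ / 6 - γ ^ 2 / 2 + γ ^ 3 / 3)) := by
  have t0 := tend_poly (fun x r => EE x r γ) (by unfold EE QQ K0 K1 K2 AA; fun_prop)
  have t1 := tend_poly (fun x r => AA x r * PP x r γ) (by unfold PP QQ AA; fun_prop)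
  have v0 : EE 0 0 γ = γ / 6 - γ ^ 2 / 2 + γ ^ 3 / 3 := by
    norm_num [EE, QQ, AA, K0, K1, K2]; ring
  have v1 : AA 0 0 * PP 0 0 γ = 1 := by norm_num [PP, QQ, AA]
  rw [v0] at t0; rw [v1] at t1
  have t := t0.div t1 one_ne_zero
  rw [div_one] at t
  refine t.congr' ?_
  filter_upwards [self_mem_nhdsWithin] with x hx
  have hx : 0 < x := hx
  have hA := AA_pos hx
  have hq1 : exp (-x) < 1 := by rw [Real.exp_lt_one_iff]; linarith
  have hDp := DD_pos g0 (exp_pos (-x)) hq1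
  have hN := NN_eq (γ := γ) hx
  have hD := DD_eq (γ := γ) hx
  have hPp : PP x (rr x) γ ≠ 0 := by
    intro h; rw [h, zero_div] at hD; linarith
  have e : NN (exp (-x)) γ / DD (exp (-x)) γ - 2 / x =
      (NN (exp (-x)) γ - 2 / x * DD (exp (-x)) γ) / DD (exp (-x)) γ := by
    field_simp
  rw [e, hN, hD]
  simp only [Pi.div_apply]
  field_simp

lemma main1 (Δ : ℝ) (hΔ : 0 < Δ) :
    Tendsto (fun ε : ℝ => ((Vstar Δ ε).toReal - 2 * Δ / ε) / ε ^ 2)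
      (nhdsWithin 0 (Set.Ioi 0)) (nhds (-(Δ / (36 * Real.sqrt 3)))) := by
  have hL : -(Δ / (36 * √3)) = Δ * (-cc) := by unfold cc; ring
  rw [hL]
  obtain ⟨γ, g0, g1, hγ⟩ := B3_exact
  have hup : Tendsto (fun x : ℝ => Δ * ((NN (exp (-x)) γ / DD (exp (-x)) γ - 2 / x) / x ^ 2)) (𝓝[>] 0)
      (𝓝 (Δ * (-cc))) := by
    rw [← hγ]; exact (upper_tendsto γ g0).const_mul Δ
  have hle : ∀ᶠ x : ℝ in 𝓝[>] 0, ((Vstar Δ x).toReal - 2 * Δ / x) / x ^ 2 ≤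
      Δ * ((NN (exp (-x)) γ / DD (exp (-x)) γ - 2 / x) / x ^ 2) := by
    filter_upwards [self_mem_nhdsWithin] with x hx
    have hx : 0 < x := hx
    have hq1 : exp (-x) < 1 := by rw [Real.exp_lt_one_iff]; linarith
    have hDp := DD_pos g0 (exp_pos (-x)) hq1
    have hNp : 0 ≤ NN (exp (-x)) γ := by
      have : 0 < 1 - exp (-x) := by linarith
      unfold NN; positivity
    have h := ENNReal.toReal_mono ENNReal.ofReal_ne_top (upper hΔ hx g0 g1)
    rw [ENNReal.toReal_ofReal (by positivity)] at h
    rw [← mul_div_assoc]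
    gcongr
    have : Δ * (NN (exp (-x)) γ / DD (exp (-x)) γ - 2 / x) =
      Δ * (NN (exp (-x)) γ / DD (exp (-x)) γ) - 2 * Δ / x := by ring
    rw [this]; linarith
  rw [tendsto_order]
  constructor
  · intro a ha
    obtain ⟨δ, hδ, hδa⟩ : ∃ δ : ℝ, 0 < δ ∧ a < Δ * (-(cc + δ)) := by
      refine ⟨(Δ * (-cc) - a) / (2 * Δ), div_pos (by linarith) (by linarith), ?_⟩
      have : Δ * (-(cc + (Δ * (-cc) - a) / (2 * Δ))) = Δ * (-cc) - (Δ * (-cc) - a) / 2 := by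
        field_simp
        ring
      rw [this]; linarith
    filter_upwards [self_mem_nhdsWithin, eventually_lower hδ] with x hx hV
    have hx : 0 < x := hx
    have h := lower hΔ hx hV.1 hV.2
    have hfin : Vstar Δ x ≠ ⊤ := ne_top_of_le_ne_top ENNReal.ofReal_ne_top (upper hΔ hx g0 g1)
    have h' := (ENNReal.ofReal_le_iff_le_toReal hfin).1 h
    refine hδa.trans_le ?_
    rw [le_div_iff₀ (by positivity)]
    have : Δ * (2 / x - (cc + δ) * x ^ 2) = 2 * Δ / x + Δ * (-(cc + δ)) * x ^ 2 := by ring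
    linarith
  · intro a ha
    filter_upwards [hle, hup.eventually_lt_const ha] with x h1 h2
    exact h1.trans_lt h2

/-- High privacy regime: V*(ε) = 2Δ/ε − Δε²/(36√3) + O(ε³) as ε → 0⁺; precisely,
(V*(ε) − 2Δ/ε)/ε² → −Δ/(36√3), and in particular the gap between V*(ε) and the
Laplacian cost 2Δ/ε tends to 0. -/
theorem Vstar_high_privacy (Δ : ℝ) (hΔ : 0 < Δ) :
    Tendsto (fun ε : ℝ => ((Vstar Δ ε).toReal - 2 * Δ / ε) / ε ^ 2)
      (nhdsWithin 0 (Set.Ioi 0)) (nhds (-(Δ / (36 * Real.sqrt 3)))) ∧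
    Tendsto (fun ε : ℝ => (Vstar Δ ε).toReal - 2 * Δ / ε)
      (nhdsWithin 0 (Set.Ioi 0)) (nhds 0) := by
  refine ⟨main1 Δ hΔ, ?_⟩
  have h2 : Tendsto (fun x : ℝ => x ^ 2) (𝓝[>] 0) (𝓝 0) := by
    have : Tendsto (fun x : ℝ => x ^ 2) (𝓝 0) (𝓝 (0 ^ 2)) := (continuous_pow 2).tendsto 0
    rw [zero_pow two_ne_zero] at this
    exact this.mono_left nhdsWithin_le_nhds
  have h := (main1 Δ hΔ).mul h2
  rw [mul_zero] at h
  refine h.congr' ?_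
  filter_upwards [self_mem_nhdsWithin] with x hx
  have hx : 0 < x := hx
  field_simp
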